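/- Let s and t be real numbers with α = min{s, t}, and define δ_{s,t}(x) = (ψ(x+t) - ψ(x+s))/(t-s) - (2x + s + t + 1)/(2(x+s)(x+t)) when s ≠ t, and δ_{s,s}(x) = ψ'(x+s) - 1/(x+s) - 1/(2(x+s)²), for x ∈ (-α, ∞). Then δ_{s,t} is completely monotonic on (-α, ∞) whenever |t - s| < 1 (including s = t), and -δ_{s,t} is completely monotonic on (-α, ∞) whenever |t - s| > 1. -/

import Mathlib

open Real

/-- The digamma (psi) function, the derivative of `log ∘ Γ`. -/
noncomputable def digamma : ℝ → ℝ :=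
  deriv fun x : ℝ => Real.log (Real.Gamma x)

/-- A function `f` is completely monotonic on a set `S` if it has derivatives of all
orders on `S` and `(-1)^n f⁽ⁿ⁾(x) ≥ 0` for all `x ∈ S` and `n ≥ 0`. -/
def CompletelyMonotonicOn (f : ℝ → ℝ) (S : Set ℝ) : Prop :=
  (∀ x ∈ S, ContDiffAt ℝ (⊤ : ℕ∞) f x) ∧ ∀ (n : ℕ), ∀ x ∈ S, 0 ≤ (-1 : ℝ) ^ n * iteratedDeriv n f x

/-- The function `δ_{s,t}` built from a divided difference of the digamma function. -/
noncomputable def deltaFun (s t : ℝ) : ℝ → ℝ := fun x =>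
  if s = t then deriv digamma (x + s) - 1 / (x + s) - 1 / (2 * (x + s) ^ 2)
  else (digamma (x + t) - digamma (x + s)) / (t - s) -
    (2 * x + s + t + 1) / (2 * (x + s) * (x + t))

open Set Filter Topology

/-! ### Completely monotonic functions -/

theorem ContDiffAt.deriv_of_infinity {f : ℝ → ℝ} {x : ℝ} (hf : ContDiffAt ℝ (⊤ : ℕ∞) f x) :
    ContDiffAt ℝ (⊤ : ℕ∞) (deriv f) x := by
  have h := (hf.fderiv_right (m := ((⊤ : ℕ∞) : WithTop ℕ∞)) (by simp)).clm_apply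
    (contDiffAt_const (c := (1 : ℝ)))
  exact h

namespace CompletelyMonotonicOn

variable {f g : ℝ → ℝ} {S : Set ℝ} {a : ℝ}

theorem congr (hS : IsOpen S) (hf : CompletelyMonotonicOn f S) (h : EqOn g f S) :
    CompletelyMonotonicOn g S := by
  have key : ∀ x ∈ S, g =ᶠ[𝓝 x] f := fun x hx => h.eventuallyEq_of_mem (hS.mem_nhds hx)
  refine ⟨fun x hx => (hf.1 x hx).congr_of_eventuallyEq (key x hx), fun n x hx => ?_⟩
  rw [(key x hx).iteratedDeriv_eq n]
  exact hf.2 n x hx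

theorem add (hf : CompletelyMonotonicOn f S) (hg : CompletelyMonotonicOn g S) :
    CompletelyMonotonicOn (f + g) S := by
  refine ⟨fun x hx => (hf.1 x hx).add (hg.1 x hx), fun n x hx => ?_⟩
  rw [iteratedDeriv_add ((hf.1 x hx).of_le (mod_cast le_top)) ((hg.1 x hx).of_le (mod_cast le_top)),
    mul_add]
  exact add_nonneg (hf.2 n x hx) (hg.2 n x hx)

theorem zero : CompletelyMonotonicOn 0 S :=
  ⟨fun _ _ => contDiffAt_const, fun n x _ => by simp⟩

theorem sum {F : ℕ → ℝ → ℝ} (h : ∀ k, CompletelyMonotonicOn (F k) S) (N : ℕ) :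
    CompletelyMonotonicOn (∑ k ∈ Finset.range N, F k) S := by
  induction N with
  | zero => simpa using zero
  | succ N ih => rw [Finset.sum_range_succ]; exact ih.add (h N)

theorem const_mul {c : ℝ} (hc : 0 ≤ c) (hf : CompletelyMonotonicOn f S) :
    CompletelyMonotonicOn (fun x => c * f x) S := by
  refine ⟨fun x hx => contDiffAt_const.mul (hf.1 x hx), fun n x hx => ?_⟩
  rw [iteratedDeriv_const_mul_field, mul_left_comm]
  exact mul_nonneg hc (hf.2 n x hx)

theorem mul (hf : CompletelyMonotonicOn f S) (hg : CompletelyMonotonicOn g S) :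
    CompletelyMonotonicOn (f * g) S := by
  refine ⟨fun x hx => (hf.1 x hx).mul (hg.1 x hx), fun n x hx => ?_⟩
  rw [iteratedDeriv_mul ((hf.1 x hx).of_le (mod_cast le_top)) ((hg.1 x hx).of_le (mod_cast le_top)),
    Finset.mul_sum]
  refine Finset.sum_nonneg fun i hi => ?_
  have hi' : i ≤ n := Nat.lt_succ_iff.1 (Finset.mem_range.1 hi)
  have h : (-1 : ℝ) ^ n = (-1) ^ i * (-1) ^ (n - i) := by rw [← pow_add, Nat.add_sub_cancel' hi']
  calc (0 : ℝ) ≤ n.choose i * (((-1) ^ i * iteratedDeriv i f x) *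
        ((-1) ^ (n - i) * iteratedDeriv (n - i) g x)) :=
        mul_nonneg (Nat.cast_nonneg _) (mul_nonneg (hf.2 i x hx) (hg.2 (n - i) x hx))
    _ = _ := by rw [h]; ring

theorem inv_add_const {r : ℝ} (hr : 0 ≤ a + r) :
    CompletelyMonotonicOn (fun x => (x + r)⁻¹) (Ioi a) := by
  have hpos : ∀ x ∈ Ioi a, 0 < x + r := fun x hx => by
    have : a < x := hx
    linarith
  refine ⟨fun x hx => (contDiffAt_id.add contDiffAt_const).inv (hpos x hx).ne', fun n x hx => ?_⟩
  have h : iteratedDeriv n (fun x : ℝ => (x + r)⁻¹) x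
      = (-1) ^ n * n.factorial * (x + r) ^ (-1 - n : ℤ) := by
    rw [iteratedDeriv_comp_add_const n (fun y : ℝ => y⁻¹) r, iteratedDeriv_eq_iterate]
    exact iter_deriv_inv n (x + r)
  rw [h, ← mul_assoc, ← mul_assoc, ← mul_pow]
  have := zpow_pos (hpos x hx) (-1 - n : ℤ)
  simp only [mul_neg, mul_one, neg_neg, one_pow, one_mul]
  positivity

theorem neg_deriv (hf : CompletelyMonotonicOn f S) :
    CompletelyMonotonicOn (fun x => -deriv f x) S := by
  refine ⟨fun x hx => (hf.1 x hx).deriv_of_infinity.neg, fun n x hx => ?_⟩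
  rw [iteratedDeriv_fun_neg, ← iteratedDeriv_succ']
  have := hf.2 (n + 1) x hx
  rw [pow_succ] at this
  linarith

theorem convexOn (hf : CompletelyMonotonicOn f (Ioi a)) : ConvexOn ℝ (Ioi a) f := by
  have hd : ∀ x ∈ Ioi a, DifferentiableAt ℝ f x := fun x hx =>
    (hf.1 x hx).differentiableAt (by simp)
  have hd' : ∀ x ∈ Ioi a, DifferentiableAt ℝ (deriv f) x := fun x hx =>
    (hf.1 x hx).deriv_of_infinity.differentiableAt (by simp)
  refine convexOn_of_deriv2_nonneg' (convex_Ioi a)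
    (fun x hx => (hd x hx).differentiableWithinAt)
    (fun x hx => (hd' x hx).differentiableWithinAt) fun x hx => ?_
  simpa [iteratedDeriv_eq_iterate] using hf.2 2 x hx

end CompletelyMonotonicOn

/-- Pointwise convergence of convex functions implies convergence of the derivatives. -/
theorem tendsto_deriv_of_convexOn {ι : Type*} {l : Filter ι} {F : ι → ℝ → ℝ} {f : ℝ → ℝ}
    {S : Set ℝ} {x : ℝ} (hS : S ∈ 𝓝 x) (hF : ∀ i, ConvexOn ℝ S (F i))
    (hFd : ∀ i, DifferentiableAt ℝ (F i) x) (hf : DifferentiableAt ℝ f x)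
    (hlim : ∀ y ∈ S, Tendsto (fun i => F i y) l (𝓝 (f y))) :
    Tendsto (fun i => deriv (F i) x) l (𝓝 (deriv f x)) := by
  have hslope := hasDerivAt_iff_tendsto_slope.1 hf.hasDerivAt
  have hx : x ∈ S := mem_of_mem_nhds hS
  have hlim' : ∀ y ∈ S, Tendsto (fun i => slope (F i) x y) l (𝓝 (slope f x y)) := fun y hy => by
    simp only [slope_def_field]
    exact ((hlim y hy).sub (hlim x hx)).div_const _
  refine tendsto_order.2 ⟨fun b hb => ?_, fun b hb => ?_⟩
  · have h1 : ∀ᶠ y in 𝓝[<] x, b < slope f x y :=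
      (hslope.mono_left (nhdsWithin_mono x fun y hy => ne_of_lt hy)).eventually (lt_mem_nhds hb)
    obtain ⟨y, ⟨hby, hyS⟩, hyx⟩ :=
      ((h1.and (mem_nhdsWithin_of_mem_nhds hS)).and self_mem_nhdsWithin).exists
    filter_upwards [(hlim' y hyS).eventually (lt_mem_nhds hby)] with i hi
    rw [slope_comm] at hi
    exact hi.trans_le ((hF i).slope_le_deriv hyS hx hyx (hFd i))
  · have h1 : ∀ᶠ y in 𝓝[>] x, slope f x y < b :=
      (hslope.mono_left (nhdsWithin_mono x fun y hy => ne_of_gt hy)).eventually (gt_mem_nhds hb)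
    obtain ⟨y, ⟨hby, hyS⟩, hyx⟩ :=
      ((h1.and (mem_nhdsWithin_of_mem_nhds hS)).and self_mem_nhdsWithin).exists
    filter_upwards [(hlim' y hyS).eventually (gt_mem_nhds hby)] with i hi
    exact ((hF i).deriv_le_slope hx hyS hyx (hFd i)).trans_lt hi

/-- A smooth pointwise limit of completely monotonic functions is completely monotonic. -/
theorem CompletelyMonotonicOn.of_tendsto {ι : Type*} {l : Filter ι} [l.NeBot] {F : ι → ℝ → ℝ}
    {f : ℝ → ℝ} {a : ℝ} (hF : ∀ i, CompletelyMonotonicOn (F i) (Ioi a))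
    (hf : ∀ x ∈ Ioi a, ContDiffAt ℝ (⊤ : ℕ∞) f x)
    (hlim : ∀ x ∈ Ioi a, Tendsto (fun i => F i x) l (𝓝 (f x))) :
    CompletelyMonotonicOn f (Ioi a) := by
  refine ⟨hf, fun n => ?_⟩
  induction n generalizing F f with
  | zero =>
    intro x hx
    refine ge_of_tendsto' (by simpa using hlim x hx) fun i => ?_
    simpa using (hF i).2 0 x hx
  | succ n ih =>
    intro x hx
    have h := ih (fun i => (hF i).neg_deriv) (fun y hy => (hf y hy).deriv_of_infinity.neg)
      (fun y hy => (tendsto_deriv_of_convexOn (Ioi_mem_nhds hy) (fun i => (hF i).convexOn)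
        (fun i => ((hF i).1 y hy).differentiableAt (by simp))
        ((hf y hy).differentiableAt (by simp)) hlim).neg) x hx
    rw [iteratedDeriv_fun_neg, ← iteratedDeriv_succ'] at h
    rw [pow_succ]
    linarith

/-! ### The digamma function on the positive half-line -/

theorem analyticAt_log_Gamma {x : ℝ} (hx : 0 < x) :
    AnalyticAt ℝ (fun y : ℝ => Real.log (Real.Gamma y)) x := by
  have hC : AnalyticAt ℂ Complex.Gamma x := by
    rw [Complex.analyticAt_iff_eventually_differentiableAt]
    have : ∀ᶠ z : ℂ in 𝓝 (x : ℂ), 0 < z.re :=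
      Complex.continuous_re.continuousAt.eventually (lt_mem_nhds (by simpa using hx))
    filter_upwards [this] with z hz
    refine Complex.differentiableAt_Gamma z fun m hm => ?_
    have hm' : (0 : ℝ) ≤ m := m.cast_nonneg
    rw [hm] at hz
    simp at hz
    linarith
  have hR : AnalyticAt ℝ Real.Gamma x := by
    have h := hC.re_ofReal
    simpa only [Complex.Gamma_ofReal, Complex.ofReal_re] using h
  exact hR.log (Real.Gamma_pos_of_pos hx)

theorem contDiffAt_digamma {x : ℝ} (hx : 0 < x) : ContDiffAt ℝ (⊤ : ℕ∞) digamma x :=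
  (analyticAt_log_Gamma hx).deriv.contDiffAt

theorem digamma_add_one {x : ℝ} (hx : 0 < x) : digamma (x + 1) = digamma x + x⁻¹ := by
  have h : (fun y : ℝ => Real.log (Real.Gamma (y + 1))) =ᶠ[𝓝 x]
      fun y => Real.log (Real.Gamma y) + Real.log y := by
    filter_upwards [lt_mem_nhds hx] with y hy
    rw [Real.Gamma_add_one hy.ne', Real.log_mul hy.ne' (Real.Gamma_pos_of_pos hy).ne', add_comm]
  have h' := h.deriv_eq
  rw [deriv_comp_add_const (fun y : ℝ => Real.log (Real.Gamma y)),
    deriv_fun_add (analyticAt_log_Gamma hx).differentiableAt (Real.differentiableAt_log hx.ne'),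
    Real.deriv_log] at h'
  exact h'

theorem monotoneOn_digamma : MonotoneOn digamma (Ioi 0) :=
  Real.convexOn_log_Gamma.monotoneOn_deriv fun _ hx => (analyticAt_log_Gamma hx).differentiableAt

theorem digamma_add_natCast_sub_le {x : ℝ} (hx : 0 < x) (m : ℕ) :
    digamma (x + m) - digamma x ≤ m * x⁻¹ := by
  induction m with
  | zero => simp
  | succ m ih =>
    have hm : (0 : ℝ) ≤ m := m.cast_nonneg
    have h1 := digamma_add_one (x := x + m) (by positivity)
    have h2 : (x + m)⁻¹ ≤ x⁻¹ := by gcongr; linarith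
    push_cast
    rw [← add_assoc, h1]
    linarith

theorem tendsto_digamma_sub {p q : ℝ} (hp : 0 < p) (hq : 0 < q) :
    Tendsto (fun N : ℕ => digamma (q + N) - digamma (p + N)) atTop (𝓝 0) := by
  wlog hpq : p ≤ q generalizing p q
  · simpa using (this hq hp (le_of_not_ge hpq)).neg
  obtain ⟨m, hm⟩ := exists_nat_ge (q - p)
  have hlim : Tendsto (fun N : ℕ => (m : ℝ) * (p + N)⁻¹) atTop (𝓝 0) := by
    simpa using ((tendsto_atTop_add_const_left atTop p
      tendsto_natCast_atTop_atTop).inv_tendsto_atTop).const_mul (m : ℝ)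
  refine squeeze_zero (fun N => ?_) (fun N => ?_) hlim
  · have hN : (0 : ℝ) ≤ N := N.cast_nonneg
    exact sub_nonneg.2 (monotoneOn_digamma (show 0 < p + N by positivity)
      (show 0 < q + N by positivity) (by linarith))
  · have hN : (0 : ℝ) ≤ N := N.cast_nonneg
    have hm0 : (0 : ℝ) ≤ m := m.cast_nonneg
    refine le_trans ?_ (digamma_add_natCast_sub_le (x := p + N) (by positivity) m)
    exact sub_le_sub_right (monotoneOn_digamma (show 0 < q + N by positivity)
      (show 0 < p + N + m by positivity) (by linarith)) _

/-! ### The function `δ_{s,t}` -/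

theorem contDiffAt_deltaFun {s t x : ℝ} (hs : 0 < x + s) (ht : 0 < x + t) :
    ContDiffAt ℝ (⊤ : ℕ∞) (deltaFun s t) x := by
  have hadd : ∀ r : ℝ, ContDiffAt ℝ (⊤ : ℕ∞) (fun y => y + r) x := fun r =>
    contDiffAt_id.add contDiffAt_const
  by_cases hst : s = t
  · have h : deltaFun s t = fun x =>
        deriv digamma (x + s) - 1 / (x + s) - 1 / (2 * (x + s) ^ 2) := by
      funext y; simp only [deltaFun, if_pos hst]
    rw [h]
    have hψ : ContDiffAt ℝ (⊤ : ℕ∞) (fun y => deriv digamma (y + s)) x :=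
      ContDiffAt.comp (g := deriv digamma) (f := fun y => y + s) x
        (contDiffAt_digamma hs).deriv_of_infinity (hadd s)
    exact (hψ.sub (contDiffAt_const.div (hadd s) hs.ne')).sub
      (contDiffAt_const.div (contDiffAt_const.mul ((hadd s).pow 2)) (by positivity))
  · have h : deltaFun s t = fun x => (digamma (x + t) - digamma (x + s)) / (t - s) -
        (2 * x + s + t + 1) / (2 * (x + s) * (x + t)) := by
      funext y; simp only [deltaFun, if_neg hst]
    rw [h]
    have hψ : ∀ r : ℝ, 0 < x + r → ContDiffAt ℝ (⊤ : ℕ∞) (fun y => digamma (y + r)) x :=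
      fun r hr => ContDiffAt.comp x (contDiffAt_digamma hr) (hadd r)
    refine (((hψ t ht).sub (hψ s hs)).div_const _).sub (ContDiffAt.div ?_ ?_ (by positivity))
    · exact (((contDiffAt_const.mul contDiffAt_id).add contDiffAt_const).add contDiffAt_const).add
        contDiffAt_const
    · exact (contDiffAt_const.mul (hadd s)).mul (hadd t)

theorem deltaFun_sub_deltaFun_add_one {s t x : ℝ} (hst : s ≠ t) (hs : 0 < x + s)
    (ht : 0 < x + t) :
    deltaFun s t x - deltaFun s t (x + 1) = (1 - (t - s) ^ 2) / 2 *
      ((x + s)⁻¹ * (x + (s + 1))⁻¹ * ((x + t)⁻¹ * (x + (t + 1))⁻¹)) := by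
  have hd : t - s ≠ 0 := sub_ne_zero.2 hst.symm
  simp only [deltaFun, if_neg hst]
  rw [show x + 1 + t = x + t + 1 by ring, show x + 1 + s = x + s + 1 by ring,
    digamma_add_one hs, digamma_add_one ht, ← add_assoc, ← add_assoc]
  have h1 : x + s + 1 ≠ 0 := by positivity
  have h2 : x + t + 1 ≠ 0 := by positivity
  have h3 := hs.ne'
  have h4 := ht.ne'
  field_simp
  ring

theorem tendsto_deltaFun_add_natCast {s t x : ℝ} (hst : s ≠ t) (hs : 0 < x + s)
    (ht : 0 < x + t) : Tendsto (fun N : ℕ => deltaFun s t (x + N)) atTop (𝓝 0) := by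
  have hinv : ∀ r : ℝ, Tendsto (fun N : ℕ => (x + r + N)⁻¹) atTop (𝓝 0) := fun r =>
    (tendsto_atTop_add_const_left atTop (x + r) tendsto_natCast_atTop_atTop).inv_tendsto_atTop
  have h := ((tendsto_digamma_sub hs ht).div_const (t - s)).sub
    ((((hinv s).add (hinv t)).add ((hinv s).mul (hinv t))).div_const 2)
  simp only [zero_div, add_zero, mul_zero, sub_zero] at h
  refine h.congr fun N => ?_
  have hN : (0 : ℝ) ≤ N := N.cast_nonneg
  have h1 : x + s + N ≠ 0 := by positivity
  have h2 : x + t + N ≠ 0 := by positivity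
  simp only [deltaFun, if_neg hst]
  rw [show x + N + t = x + t + N by ring, show x + N + s = x + s + N by ring]
  congr 1
  field_simp
  ring

theorem completelyMonotonicOn_const_mul_deltaFun {s t a c : ℝ} (hst : s ≠ t) (hs : 0 ≤ a + s)
    (ht : 0 ≤ a + t) (hc : 0 ≤ c * ((1 - (t - s) ^ 2) / 2)) :
    CompletelyMonotonicOn (fun x => c * deltaFun s t x) (Ioi a) := by
  have hpos : ∀ x ∈ Ioi a, 0 < x + s ∧ 0 < x + t := fun x hx => by
    have : a < x := hx
    constructor <;> linarith
  have hterm : ∀ k : ℕ, CompletelyMonotonicOn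
      (fun x => c * (deltaFun s t (x + k) - deltaFun s t (x + (k + 1 : ℕ)))) (Ioi a) := by
    intro k
    have hk : (0 : ℝ) ≤ k := k.cast_nonneg
    have h := CompletelyMonotonicOn.const_mul hc
      (((CompletelyMonotonicOn.inv_add_const (a := a) (r := k + s) (by linarith)).mul
        (CompletelyMonotonicOn.inv_add_const (a := a) (r := k + (s + 1)) (by linarith))).mul
      ((CompletelyMonotonicOn.inv_add_const (a := a) (r := k + t) (by linarith)).mul
        (CompletelyMonotonicOn.inv_add_const (a := a) (r := k + (t + 1)) (by linarith))))
    refine h.congr isOpen_Ioi fun x hx => ?_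
    obtain ⟨h1, h2⟩ := hpos x hx
    have := deltaFun_sub_deltaFun_add_one (x := x + k) hst (by linarith) (by linarith)
    simp only [Nat.cast_add, Nat.cast_one, ← add_assoc, Pi.mul_apply] at this ⊢
    rw [this]
    ring
  refine CompletelyMonotonicOn.of_tendsto (l := atTop) (CompletelyMonotonicOn.sum hterm)
    (fun x hx => contDiffAt_const.mul (contDiffAt_deltaFun (hpos x hx).1 (hpos x hx).2))
    fun x hx => ?_
  have h := ((tendsto_deltaFun_add_natCast hst (hpos x hx).1 (hpos x hx).2).const_sub
    (deltaFun s t x)).const_mul c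
  rw [sub_zero] at h
  refine h.congr fun N => ?_
  rw [Finset.sum_apply, ← Finset.mul_sum,
    Finset.sum_range_sub' (fun k : ℕ => deltaFun s t (x + k)) N]
  simp

theorem tendsto_deltaFun_diagonal {s x : ℝ} (hs : 0 < x + s) :
    Tendsto (fun t => deltaFun s t x) (𝓝[>] s) (𝓝 (deltaFun s s x)) := by
  have hd : HasDerivAt (fun r => digamma (x + r)) (deriv digamma (x + s)) s :=
    HasDerivAt.comp_const_add x s ((contDiffAt_digamma hs).differentiableAt (by simp)).hasDerivAt
  have h1 : Tendsto (fun t => (digamma (x + t) - digamma (x + s)) / (t - s)) (𝓝[>] s)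
      (𝓝 (deriv digamma (x + s))) := by
    have hle : 𝓝[>] s ≤ 𝓝[≠] s := nhdsWithin_mono s fun t ht => ne_of_gt ht
    simpa only [slope_fun_def_field] using (hasDerivAt_iff_tendsto_slope.1 hd).mono_left hle
  have h2 : Tendsto (fun t => (2 * x + s + t + 1) / (2 * (x + s) * (x + t))) (𝓝[>] s)
      (𝓝 ((2 * x + s + s + 1) / (2 * (x + s) * (x + s)))) := by
    refine (ContinuousAt.div (by fun_prop) (by fun_prop) (by positivity)).tendsto.mono_left
      nhdsWithin_le_nhds
  have h := h1.sub h2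
  have he : deltaFun s s x =
      deriv digamma (x + s) - (2 * x + s + s + 1) / (2 * (x + s) * (x + s)) := by
    simp only [deltaFun, if_pos]
    have := hs.ne'
    field_simp
    ring
  rw [he]
  refine h.congr' ?_
  filter_upwards [self_mem_nhdsWithin] with t ht
  simp only [deltaFun, if_neg (ne_of_lt (mem_Ioi.1 ht))]

theorem completelyMonotonicOn_deltaFun_self (s : ℝ) :
    CompletelyMonotonicOn (deltaFun s s) (Ioi (-s)) := by
  have hpos : ∀ x ∈ Ioi (-s), 0 < x + s := fun x hx => by
    have : -s < x := hx
    linarith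
  have hu : Tendsto (fun N : ℕ => s + 1 / ((N : ℝ) + 1)) atTop (𝓝[>] s) := by
    refine tendsto_nhdsWithin_iff.2 ⟨?_, Eventually.of_forall fun N => ?_⟩
    · simpa using tendsto_one_div_add_atTop_nhds_zero_nat.const_add s
    · have : 0 < 1 / ((N : ℝ) + 1) := Nat.one_div_pos_of_nat
      exact lt_add_of_pos_right s this
  refine CompletelyMonotonicOn.of_tendsto (l := atTop)
    (F := fun N : ℕ => deltaFun s (s + 1 / ((N : ℝ) + 1))) (fun N => ?_)
    (fun x hx => contDiffAt_deltaFun (hpos x hx) (hpos x hx))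
    fun x hx => (tendsto_deltaFun_diagonal (hpos x hx)).comp hu
  have h0 : 0 < 1 / ((N : ℝ) + 1) := Nat.one_div_pos_of_nat
  have h1 : 1 / ((N : ℝ) + 1) ≤ 1 := by
    rw [div_le_one (by positivity)]
    linarith [N.cast_nonneg (α := ℝ)]
  have h := completelyMonotonicOn_const_mul_deltaFun (s := s) (t := s + 1 / ((N : ℝ) + 1))
    (a := -s) (c := 1) (by linarith) (by linarith) (by linarith)
    (by rw [add_sub_cancel_left]; nlinarith)
  simpa only [one_mul] using h

theorem qi_divided_difference_complete_monotonicity (s t : ℝ) :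
    (|t - s| < 1 → CompletelyMonotonicOn (deltaFun s t) (Set.Ioi (-(min s t)))) ∧
      (1 < |t - s| →
        CompletelyMonotonicOn (fun x => -(deltaFun s t x)) (Set.Ioi (-(min s t)))) := by
  have hs : 0 ≤ -(min s t) + s := by linarith [min_le_left s t]
  have ht : 0 ≤ -(min s t) + t := by linarith [min_le_right s t]
  refine ⟨fun h => ?_, fun h => ?_⟩
  · by_cases hst : s = t
    · subst hst
      rw [min_self]
      exact completelyMonotonicOn_deltaFun_self s
    · have hsq : (t - s) ^ 2 < 1 := (sq_lt_one_iff_abs_lt_one _).2 h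
      simpa only [one_mul] using
        completelyMonotonicOn_const_mul_deltaFun (c := 1) hst hs ht (by linarith)
  · have hst : s ≠ t := by
      rintro rfl
      norm_num at h
    have hsq : 1 < (t - s) ^ 2 := (one_lt_sq_iff_one_lt_abs _).2 h
    simpa only [neg_one_mul] using
      completelyMonotonicOn_const_mul_deltaFun (c := -1) hst hs ht (by linarith)
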